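/- Let T > 0, let U be a metrizable Suslin space, let ϑ ∈ IC(0,T;U), and let R ≥ 0. Let 𝔍 be the set of Young measures μ on U over [0,T] satisfying ∫_{U×[0,T]} ϑ(t,u) μ(du,dt) ≤ R. Then 𝔍 is sequentially relatively compact in the stable topology: every sequence (μ_n) of elements of 𝔍 admits a subsequence (μ_{n_k}) and a Young measure μ on U over [0,T] such that μ_{n_k} converges stably to μ. -/

import Mathlib

open MeasureTheory Set Filter Topology ENNReal NNReal

/-- A Young measure on `U` over `[0,T]`: a Borel measure on `U × ℝ` whose marginal on the
time axis is Lebesgue measure on `[0,T]` (and which carries no mass outside `U × [0,T]`). -/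
def IsYoungMeasure {U : Type*} [MeasurableSpace U] (T : ℝ) (μ : Measure (U × ℝ)) : Prop :=
  ∀ D : Set ℝ, MeasurableSet D → μ (Set.univ ×ˢ D) = volume (D ∩ Set.Icc 0 T)

/-- Stable convergence of a sequence of Young measures on `U` over `[0,T]`: for every Borel
`D ⊆ [0,T]` and every bounded continuous `f : U → ℝ`, the integrals of `f(u)` over `U × D`
converge. -/
def StablyTendsTo {U : Type*} [TopologicalSpace U] [MeasurableSpace U] (T : ℝ)
    (μs : ℕ → Measure (U × ℝ)) (μ : Measure (U × ℝ)) : Prop :=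
  ∀ D : Set ℝ, MeasurableSet D → D ⊆ Set.Icc 0 T →
    ∀ f : BoundedContinuousFunction U ℝ,
      Filter.Tendsto (fun n => ∫ p in Set.univ ×ˢ D, f p.1 ∂(μs n)) Filter.atTop
        (nhds (∫ p in Set.univ ×ˢ D, f p.1 ∂μ))

/-- `U` is a Suslin space: a continuous surjective image of a Polish space. -/
def IsSuslin (U : Type*) [TopologicalSpace U] : Prop :=
  ∃ (S : Type) (ts : TopologicalSpace S), @PolishSpace S ts ∧
    ∃ φ : S → U, @Continuous S U ts _ φ ∧ Function.Surjective φ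

lemma ym_capacitable {α : Type*} [TopologicalSpace α] [MeasurableSpace α]
    (μ : Measure α) [μ.OuterRegular]
    {A : Set α} (hA : AnalyticSet A) {c : ℝ≥0∞} (hc : c < μ A) :
    ∃ K ⊆ A, IsCompact K ∧ c ≤ μ K := by
  rw [AnalyticSet] at hA
  rcases hA with rfl | ⟨f, hf, rfl⟩
  · simp at hc
  have step : ∀ (n : ℕ) (E : {E : Set (ℕ → ℕ) // c < μ (f '' E)}),
      ∃ k : ℕ, c < μ (f '' (E.1 ∩ {x | x n ≤ k})) := by
    rintro n ⟨E, hE⟩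
    have hU : f '' E = ⋃ k : ℕ, f '' (E ∩ {x | x n ≤ k}) := by
      rw [← image_iUnion]
      congr 1
      ext x
      simp only [mem_iUnion, mem_inter_iff, mem_ofPred_eq]
      exact ⟨fun h => ⟨x n, h, le_rfl⟩, fun ⟨_, h, _⟩ => h⟩
    have hmono : Monotone fun k : ℕ => f '' (E ∩ {x | x n ≤ k}) := by
      intro a b hab
      apply image_mono
      intro x hx
      exact ⟨hx.1, le_trans (show x n ≤ a from hx.2) hab⟩
    rw [hU, hmono.measure_iUnion] at hE
    exact lt_iSup_iff.1 hE
  choose k hk using step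
  let E : ℕ → {E : Set (ℕ → ℕ) // c < μ (f '' E)} := fun n =>
    Nat.rec ⟨univ, by simpa using hc⟩ (fun n E => ⟨E.1 ∩ {x | x n ≤ k n E}, hk n E⟩) n
  have hEs : ∀ n, (E (n+1)).1 = (E n).1 ∩ {x | x n ≤ k n (E n)} := fun n => rfl
  let kk : ℕ → ℕ := fun n => k n (E n)
  have hE : ∀ n, ∀ x ∈ (E n).1, ∀ i < n, x i ≤ kk i := by
    intro n
    induction n with
    | zero => intro x _ i hi; omega
    | succ n ih =>
      intro x hx i hi
      rw [hEs] at hx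
      rcases Nat.lt_succ_iff_lt_or_eq.1 hi with h | rfl
      · exact ih x hx.1 i h
      · exact hx.2
  let K0 : Set (ℕ → ℕ) := Set.pi univ fun n => Iic (kk n)
  have hK0 : IsCompact K0 := isCompact_univ_pi fun n => (finite_Iic _).isCompact
  refine ⟨f '' K0, image_subset_range _ _, hK0.image hf, ?_⟩
  rw [Set.measure_eq_iInf_isOpen]
  refine le_iInf fun V => le_iInf fun hKV => le_iInf fun hV => ?_
  by_contra hcon
  have hex : ∀ n, ∃ x ∈ (E n).1, f x ∉ V := by
    intro n
    by_contra! h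
    apply hcon
    refine (E n).2.le.trans (measure_mono ?_)
    rintro _ ⟨x, hx, rfl⟩
    exact h x hx
  choose x hxE hxV using hex
  have hy : ∀ n, (fun i => min (x n i) (kk i)) ∈ K0 := fun n i _ => mem_Iic.2 (min_le_right _ _)
  obtain ⟨y, hyK, φ, hφ, hlim⟩ := hK0.isSeqCompact hy
  have hx : Tendsto (x ∘ φ) atTop (𝓝 y) := by
    rw [tendsto_pi_nhds] at hlim ⊢
    intro i
    refine (hlim i).congr' ?_
    filter_upwards [eventually_gt_atTop i] with n hn
    have := hE (φ n) (x (φ n)) (hxE _) i (hn.trans_le hφ.le_apply)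
    simpa using this
  have h1 : ∀ᶠ n in atTop, f (x (φ n)) ∈ V :=
    ((hf.tendsto y).comp hx).eventually_mem (hV.mem_nhds (hKV ⟨y, hyK, rfl⟩))
  obtain ⟨n, hn⟩ := h1.exists
  exact hxV _ hn

lemma ym_suslin_secondCountable {U : Type*} [TopologicalSpace U]
    [TopologicalSpace.MetrizableSpace U] (hU : IsSuslin U) : SecondCountableTopology U := by
  obtain ⟨S, ts, hS, φ, hφ, hsurj⟩ := hU
  letI := TopologicalSpace.metrizableSpaceMetric U
  haveI : TopologicalSpace.SeparableSpace U := hsurj.denseRange.separableSpace hφ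
  exact UniformSpace.secondCountable_of_separable U

lemma ym_analytic {U : Type*} [TopologicalSpace U] [MeasurableSpace U] [BorelSpace U]
    (hU : IsSuslin U) {B : Set (U × ℝ)} (hB : MeasurableSet B) :
    AnalyticSet (Prod.snd '' B) := by
  obtain ⟨S, ts, hS, φ, hφ, hsurj⟩ := hU
  letI : MeasurableSpace S := borel S
  haveI : BorelSpace S := ⟨rfl⟩
  have hm : Measurable (Prod.map φ (id : ℝ → ℝ)) := hφ.measurable.prodMap measurable_id
  have h1 : AnalyticSet (Prod.map φ (id : ℝ → ℝ) ⁻¹' B) := (hm hB).analyticSet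
  have h2 : Prod.snd '' B = Prod.snd '' (Prod.map φ (id : ℝ → ℝ) ⁻¹' B) := by
    ext t
    constructor
    · rintro ⟨⟨u, t⟩, h, rfl⟩
      obtain ⟨s, rfl⟩ := hsurj u
      exact ⟨(s, t), h, rfl⟩
    · rintro ⟨⟨s, t⟩, h, rfl⟩
      exact ⟨(φ s, t), h, rfl⟩
  rw [h2]
  exact h1.image_of_continuous continuous_snd

/-- Up to a time set of small measure, a measurable compact-valued map stays in one compact. -/
lemma ym_compact_union {U : Type*} [TopologicalSpace U] [SecondCountableTopology U]
    [MeasurableSpace U] [BorelSpace U] (hU : IsSuslin U)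
    (T : ℝ) {B : Set (U × ℝ)} (hB : MeasurableSet B)
    (hcomp : ∀ t, IsCompact {u | (u, t) ∈ B}) {ε : ℝ≥0∞} (hε : ε ≠ 0) :
    ∃ (C : Set U) (O : Set ℝ), IsCompact C ∧ IsOpen O ∧
      (volume.restrict (Icc 0 T)) O ≤ ε ∧
      ∀ t ∈ Icc 0 T, t ∉ O → ∀ u, (u, t) ∈ B → u ∈ C := by
  classical
  set lam : Measure ℝ := volume.restrict (Icc 0 T) with hlam
  let ι := Finset (TopologicalSpace.countableBasis U)
  haveI : Countable (TopologicalSpace.countableBasis U) :=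
    (TopologicalSpace.countable_countableBasis U).to_subtype
  let V : ι → Set U := fun i => ⋃ b ∈ i, (b : Set U)
  have hVo : ∀ i, IsOpen (V i) := fun i => isOpen_biUnion fun b _ =>
    TopologicalSpace.isOpen_of_mem_countableBasis b.2
  let A : ι → Set ℝ := fun i => Prod.snd '' (B ∩ Prod.fst ⁻¹' (V i)ᶜ)
  have hA : ∀ i, AnalyticSet (A i) := fun i =>
    ym_analytic hU (hB.inter (measurable_fst (hVo i).measurableSet.compl))
  obtain ⟨δ, hδ, hδsum⟩ := ENNReal.exists_pos_sum_of_countable' hε ι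
  have hK : ∀ i, ∃ K O : Set ℝ, K ⊆ A i ∧ IsClosed K ∧ IsOpen O ∧ A i \ K ⊆ O ∧ lam O ≤ δ i := by
    intro i
    obtain ⟨K, hKA, hKc, hKm⟩ : ∃ K ⊆ A i, IsCompact K ∧ lam (A i) - δ i / 2 ≤ lam K := by
      by_cases h0 : lam (A i) = 0
      · exact ⟨∅, empty_subset _, isCompact_empty, by simp [h0]⟩
      · refine ym_capacitable lam (hA i) ?_
        exact ENNReal.sub_lt_self (measure_ne_top _ _) h0 (ENNReal.half_pos (hδ i).ne').ne'
    have hdiff : lam (A i \ K) ≤ δ i / 2 := by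
      rw [measure_sdiff hKA hKc.measurableSet.nullMeasurableSet (measure_ne_top _ _)]
      rw [tsub_le_iff_right] at hKm ⊢
      rwa [add_comm]
    by_cases hδt : δ i = ∞
    · exact ⟨K, univ, hKA, hKc.isClosed, isOpen_univ, subset_univ _, by simp [hδt]⟩
    have hlt : lam (A i \ K) < δ i :=
      hdiff.trans_lt (ENNReal.half_lt_self (hδ i).ne' hδt)
    obtain ⟨O, hO, hOo, hOm⟩ := Set.exists_isOpen_lt_of_lt _ _ hlt
    exact ⟨K, O, hKA, hKc.isClosed, hOo, hO, hOm.le⟩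
  choose K O hKA hKc hOo hAO hOm using hK
  let J : Set ℝ := Icc 0 T \ ⋃ i, O i
  have hJ : IsCompact J := isCompact_Icc.diff (isOpen_iUnion hOo)
  refine ⟨⋃ t ∈ J, {u | (u, t) ∈ B}, ⋃ i, O i, ?_, isOpen_iUnion hOo, ?_, ?_⟩
  · refine isCompact_of_finite_subcover ?_
    intro κ W hW hcov
    have key : ∃ F : Finset κ, ∀ t ∈ J, {u | (u, t) ∈ B} ⊆ ⋃ j ∈ F, W j := by
      refine hJ.induction_on (p := fun S => ∃ F : Finset κ, ∀ t ∈ S,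
        {u | (u, t) ∈ B} ⊆ ⋃ j ∈ F, W j) ⟨∅, by simp⟩ ?_ ?_ ?_
      · rintro s t hst ⟨F, hF⟩
        exact ⟨F, fun x hx => hF x (hst hx)⟩
      · rintro s t ⟨F, hF⟩ ⟨G, hG⟩
        refine ⟨F ∪ G, ?_⟩
        rintro x (hx | hx)
        · exact (hF x hx).trans (biUnion_subset_biUnion_left fun j hj => by simp at hj ⊢; tauto)
        · exact (hG x hx).trans (biUnion_subset_biUnion_left fun j hj => by simp at hj ⊢; tauto)
      · intro t ht
        obtain ⟨F, hF⟩ := (hcomp t).elim_finite_subcover W hW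
          ((subset_biUnion_of_mem (u := fun t => {u | (u, t) ∈ B}) ht).trans hcov)
        have hWo : IsOpen (⋃ j ∈ F, W j) := isOpen_biUnion fun j _ => hW j
        obtain ⟨i, hi⟩ : ∃ i : ι, {u | (u, t) ∈ B} ⊆ V i ∧ V i ⊆ ⋃ j ∈ F, W j := by
          let I := {b : TopologicalSpace.countableBasis U // (b : Set U) ⊆ ⋃ j ∈ F, W j}
          obtain ⟨G, hG⟩ := (hcomp t).elim_finite_subcover (fun b : I => (b.1 : Set U))
            (fun b => TopologicalSpace.isOpen_of_mem_countableBasis b.1.2) (by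
              intro u hu
              obtain ⟨b, hb, hub, hbW⟩ := (TopologicalSpace.isBasis_countableBasis U).exists_subset_of_mem_open
                (hF hu) hWo
              exact mem_iUnion.2 ⟨⟨⟨b, hb⟩, hbW⟩, hub⟩)
          refine ⟨G.image Subtype.val, ?_, ?_⟩
          · intro u hu
            obtain ⟨b, hb, hub⟩ := mem_iUnion₂.1 (hG hu)
            exact mem_iUnion₂.2 ⟨b.1, Finset.mem_image_of_mem _ hb, hub⟩
          · refine iUnion₂_subset ?_
            intro b hb
            obtain ⟨b', _, rfl⟩ := Finset.mem_image.1 hb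
            exact b'.2
        have htK : t ∉ K i := by
          intro h
          obtain ⟨⟨u, t'⟩, ⟨h1, h2⟩, rfl⟩ := hKA i h
          exact h2 (hi.1 h1)
        refine ⟨J ∩ (K i)ᶜ, inter_mem self_mem_nhdsWithin
          (mem_nhdsWithin_of_mem_nhds ((hKc i).isOpen_compl.mem_nhds htK)), F, ?_⟩
        rintro s ⟨hsJ, hsK⟩ u hu
        by_contra hcon
        have hsA : s ∈ A i := ⟨(u, s), ⟨hu, fun h => hcon (hi.2 h)⟩, rfl⟩
        exact hsJ.2 (mem_iUnion.2 ⟨i, hAO i ⟨hsA, hsK⟩⟩)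
    obtain ⟨F, hF⟩ := key
    exact ⟨F, iUnion₂_subset hF⟩
  · exact (measure_iUnion_le _).trans ((ENNReal.tsum_le_tsum hOm).trans hδsum.le)
  · intro t ht htO u hu
    exact mem_iUnion₂.2 ⟨t, ⟨ht, htO⟩, hu⟩

lemma ym_map_snd {U : Type*} [MeasurableSpace U] {T : ℝ} {μ : Measure (U × ℝ)} :
    IsYoungMeasure T μ ↔ μ.map Prod.snd = volume.restrict (Icc 0 T) := by
  constructor
  · intro h
    ext D hD
    rw [Measure.map_apply measurable_snd hD, Measure.restrict_apply hD, ← h D hD, univ_prod]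
  · intro h D hD
    rw [univ_prod, ← Measure.map_apply measurable_snd hD, h, Measure.restrict_apply hD]

lemma ym_tight {T : ℝ}
    {U : Type*} [TopologicalSpace U] [T2Space U] [SecondCountableTopology U]
    [MeasurableSpace U] [BorelSpace U] (hU : IsSuslin U)
    (ϑ : ℝ → U → ℝ≥0∞) (hϑmeas : Measurable fun p : U × ℝ => ϑ p.2 p.1)
    (hϑinf : ∀ t : ℝ, ∀ R : NNReal, IsCompact {u : U | ϑ t u ≤ R})
    (R : NNReal) {ε : ℝ≥0∞} (hε : 0 < ε) :
    ∃ C : Set (U × ℝ), IsCompact C ∧ ∀ μ : Measure (U × ℝ), IsYoungMeasure T μ →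
      (∫⁻ p in Set.univ ×ˢ Set.Icc (0:ℝ) T, ϑ p.2 p.1 ∂μ) ≤ R → μ Cᶜ ≤ ε := by
  obtain ⟨M, hM0, hM⟩ : ∃ M : NNReal, M ≠ 0 ∧ (R : ℝ≥0∞) / M ≤ ε / 2 := by
    by_cases hεt : ε = ∞
    · exact ⟨1, one_ne_zero, by simp [hεt, ENNReal.top_div]⟩
    lift ε to NNReal using hεt
    have hε' : 0 < ε := by exact_mod_cast hε
    refine ⟨2 * R / ε + 1, by positivity, ?_⟩
    refine ENNReal.div_le_of_le_mul ?_
    rw [show (ε : ℝ≥0∞) / 2 = ((ε / 2 : NNReal) : ℝ≥0∞) by simp]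
    norm_cast
    have : ε / 2 * (2 * R / ε + 1) = R + ε / 2 := by field_simp
    rw [this]
    exact le_self_add
  obtain ⟨C, O, hC, hO, hOm, hCO⟩ := ym_compact_union hU T
    (B := {p : U × ℝ | ϑ p.2 p.1 ≤ M}) (measurableSet_le hϑmeas measurable_const)
    (fun t => hϑinf t M) (ENNReal.half_pos hε.ne').ne'
  refine ⟨C ×ˢ Icc 0 T, hC.prod isCompact_Icc, fun μ hμ hb => ?_⟩
  have hsub : (C ×ˢ Icc 0 T)ᶜ ⊆ (univ ×ˢ (Icc 0 T)ᶜ ∪ univ ×ˢ O) ∪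
      ({p : U × ℝ | (M : ℝ≥0∞) ≤ ϑ p.2 p.1} ∩ univ ×ˢ Icc 0 T) := by
    rintro ⟨u, t⟩ h
    by_cases ht : t ∈ Icc 0 T
    · by_cases htO : t ∈ O
      · exact Or.inl (Or.inr ⟨trivial, htO⟩)
      · refine Or.inr ⟨?_, trivial, ht⟩
        by_contra hlt
        exact h ⟨hCO t ht htO u (show ϑ t u ≤ M from (not_le.1 hlt).le), ht⟩
    · exact Or.inl (Or.inl ⟨trivial, ht⟩)
  have h1 : μ (univ ×ˢ (Icc 0 T)ᶜ) = 0 := by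
    rw [hμ _ measurableSet_Icc.compl]; simp
  have h2 : μ (univ ×ˢ O) ≤ ε / 2 := by
    rw [hμ _ hO.measurableSet, ← Measure.restrict_apply hO.measurableSet]; exact hOm
  have h3 : μ ({p : U × ℝ | (M : ℝ≥0∞) ≤ ϑ p.2 p.1} ∩ univ ×ˢ Icc 0 T) ≤ ε / 2 := by
    rw [← Measure.restrict_apply (measurableSet_le measurable_const hϑmeas)]
    refine (meas_ge_le_lintegral_div hϑmeas.aemeasurable (by simpa using hM0)
      ENNReal.coe_ne_top).trans ?_
    exact (ENNReal.div_le_div_right hb _).trans hM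
  calc μ (C ×ˢ Icc 0 T)ᶜ ≤ (0 + ε / 2) + ε / 2 := by
        refine (measure_mono hsub).trans ((measure_union_le _ _).trans ?_)
        refine add_le_add ((measure_union_le _ _).trans ?_) h3
        rw [h1]; exact add_le_add le_rfl h2
    _ = ε := by rw [zero_add, ENNReal.add_halves]

lemma ym_approx {U : Type*} [TopologicalSpace U] [MeasurableSpace U]
    [BorelSpace U] {T : ℝ} {μ : Measure (U × ℝ)} (hμ : IsYoungMeasure T μ)
    [IsFiniteMeasure μ] {D : Set ℝ} (hD : MeasurableSet D)
    (f : BoundedContinuousFunction U ℝ) (g : BoundedContinuousFunction ℝ ℝ) :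
    |(∫ p in univ ×ˢ D, f p.1 ∂μ) - ∫ p, f p.1 * g p.2 ∂μ| ≤
      ‖f‖ * ∫ t, ‖D.indicator (fun _ => (1:ℝ)) t - g t‖ ∂(volume.restrict (Icc 0 T)) := by
  have hfm : Measurable fun p : U × ℝ => f p.1 := f.continuous.measurable.comp measurable_fst
  have hgm : Measurable fun p : U × ℝ => g p.2 := g.continuous.measurable.comp measurable_snd
  have hfi : Integrable (fun p : U × ℝ => f p.1) μ :=
    Integrable.of_bound hfm.aestronglyMeasurable ‖f‖ (ae_of_all _ fun p => f.norm_coe_le_norm _)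
  have hfg : Integrable (fun p : U × ℝ => f p.1 * g p.2) μ := by
    refine Integrable.of_bound (hfm.mul hgm).aestronglyMeasurable (‖f‖ * ‖g‖)
      (ae_of_all _ fun p => ?_)
    rw [norm_mul]
    exact mul_le_mul (f.norm_coe_le_norm _) (g.norm_coe_le_norm _) (norm_nonneg _) (norm_nonneg _)
  have hDm : MeasurableSet ((univ : Set U) ×ˢ D) := MeasurableSet.univ.prod hD
  have hind : Measurable fun t => ‖D.indicator (fun _ => (1:ℝ)) t - g t‖ :=
    ((measurable_const.indicator hD).sub g.continuous.measurable).norm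
  rw [← ym_map_snd.1 hμ, integral_map measurable_snd.aemeasurable hind.aestronglyMeasurable,
    ← integral_indicator hDm, ← integral_sub (hfi.indicator hDm) hfg, ← integral_const_mul,
    ← Real.norm_eq_abs]
  refine norm_integral_le_of_norm_le ?_ (ae_of_all _ fun p => ?_)
  · refine Integrable.const_mul (Integrable.of_bound
      (hind.comp measurable_snd).aestronglyMeasurable (1 + ‖g‖) (ae_of_all _ fun p => ?_)) _
    rw [Function.comp_apply, norm_norm]
    refine (norm_sub_le _ _).trans (add_le_add ?_ (g.norm_coe_le_norm _))
    by_cases h : p.2 ∈ D <;> simp [h]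
  · have : (univ ×ˢ D).indicator (fun p : U × ℝ => f p.1) p - f p.1 * g p.2
        = f p.1 * (D.indicator (fun _ => (1:ℝ)) p.2 - g p.2) := by
      by_cases h : p.2 ∈ D
      · rw [indicator_of_mem (show p ∈ univ ×ˢ D from ⟨trivial, h⟩), indicator_of_mem h]; ring
      · rw [indicator_of_notMem (fun h' : p ∈ univ ×ˢ D => h h'.2), indicator_of_notMem h]; ring
    rw [this, norm_mul]
    exact mul_le_mul_of_nonneg_right (f.norm_coe_le_norm _) (norm_nonneg _)

lemma ym_stable {U : Type*} [TopologicalSpace U] [SecondCountableTopology U] [MeasurableSpace U]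
    [BorelSpace U] {T : ℝ} {μs : ℕ → Measure (U × ℝ)} {μ : Measure (U × ℝ)}
    [∀ n, IsFiniteMeasure (μs n)] [IsFiniteMeasure μ]
    (hμs : ∀ n, IsYoungMeasure T (μs n)) (hμ : IsYoungMeasure T μ)
    (h : ∀ F : BoundedContinuousFunction (U × ℝ) ℝ,
      Tendsto (fun n => ∫ p, F p ∂(μs n)) atTop (𝓝 (∫ p, F p ∂μ))) :
    StablyTendsTo T μs μ := by
  intro D hD _ f
  rw [Metric.tendsto_atTop]
  intro ε hε
  have hint : Integrable (D.indicator (fun _ => (1:ℝ))) (volume.restrict (Icc 0 T)) :=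
    (integrable_const _).indicator hD
  have hδ : 0 < ε / (3 * (‖f‖ + 1)) := by positivity
  obtain ⟨g, hg, -⟩ := hint.exists_boundedContinuous_integral_sub_le hδ
  have hb : ‖f‖ * ∫ t, ‖D.indicator (fun _ => (1:ℝ)) t - g t‖ ∂(volume.restrict (Icc 0 T))
      < ε / 3 := by
    have h0 := norm_nonneg f
    calc _ ≤ ‖f‖ * (ε / (3 * (‖f‖ + 1))) := mul_le_mul_of_nonneg_left hg h0
      _ < (‖f‖ + 1) * (ε / (3 * (‖f‖ + 1))) := mul_lt_mul_of_pos_right (by linarith) hδ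
      _ = ε / 3 := by field_simp
  let F : BoundedContinuousFunction (U × ℝ) ℝ :=
    (f.compContinuous ⟨Prod.fst, continuous_fst⟩) * (g.compContinuous ⟨Prod.snd, continuous_snd⟩)
  have hF := h F
  rw [Metric.tendsto_atTop] at hF
  obtain ⟨N, hN⟩ := hF (ε / 3) (by positivity)
  refine ⟨N, fun n hn => ?_⟩
  have h1 := (ym_approx (hμs n) hD f g).trans_lt hb
  have h2 := (ym_approx hμ hD f g).trans_lt hb
  have h3 : |(∫ p, f p.1 * g p.2 ∂(μs n)) - ∫ p, f p.1 * g p.2 ∂μ| < ε / 3 := hN n hn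
  rw [Real.dist_eq]
  rw [abs_lt] at *
  constructor <;> linarith [h1.1, h1.2, h2.1, h2.2, h3.1, h3.2]

/-- Prohorov criterion: a set of Young measures on a metrizable Suslin space
with uniformly bounded integral of an inf-compact integrand `ϑ` is sequentially relatively
compact in the stable topology. -/
theorem young_measures_flexibly_tight_seq_compact
    (T : ℝ) (hT : 0 < T)
    (U : Type*) [TopologicalSpace U] [TopologicalSpace.MetrizableSpace U]
    [MeasurableSpace U] [BorelSpace U] (hU : IsSuslin U)
    (ϑ : ℝ → U → ℝ≥0∞) (hϑmeas : Measurable fun p : U × ℝ => ϑ p.2 p.1)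
    (hϑinf : ∀ t : ℝ, ∀ R : NNReal, IsCompact {u : U | ϑ t u ≤ R})
    (R : NNReal)
    (μs : ℕ → Measure (U × ℝ))
    (hyoung : ∀ n, IsYoungMeasure T (μs n))
    (hbound : ∀ n, (∫⁻ p in Set.univ ×ˢ Set.Icc (0:ℝ) T, ϑ p.2 p.1 ∂(μs n)) ≤ R) :
    ∃ φ : ℕ → ℕ, StrictMono φ ∧ ∃ μ : Measure (U × ℝ), IsYoungMeasure T μ ∧
      StablyTendsTo T (fun k => μs (φ k)) μ := by
  haveI := ym_suslin_secondCountable hU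
  have hT0 : ENNReal.ofReal T ≠ 0 := by simpa using hT
  have hTt : ENNReal.ofReal T ≠ ∞ := ENNReal.ofReal_ne_top
  have hmass : ∀ n, μs n univ = ENNReal.ofReal T := by
    intro n
    have := hyoung n univ MeasurableSet.univ
    simpa using this
  haveI : ∀ n, IsFiniteMeasure (μs n) := fun n => ⟨by rw [hmass]; exact hTt.lt_top⟩
  let P : ℕ → ProbabilityMeasure (U × ℝ) := fun n =>
    ⟨(ENNReal.ofReal T)⁻¹ • μs n, ⟨by
      rw [Measure.smul_apply, hmass, smul_eq_mul, ENNReal.inv_mul_cancel hT0 hTt]⟩⟩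
  have hP : ∀ n, (P n : Measure (U × ℝ)) = (ENNReal.ofReal T)⁻¹ • μs n := fun n => rfl
  have hcl : IsCompact (closure (range P)) := by
    apply isCompact_closure_of_isTightMeasureSet
    rw [isTightMeasureSet_iff_exists_isCompact_measure_compl_le]
    intro ε hε
    obtain ⟨C, hC, hCμ⟩ := ym_tight (T := T) hU ϑ hϑmeas hϑinf R
      (ε := ENNReal.ofReal T * ε) (ENNReal.mul_pos hT0 hε.ne')
    refine ⟨C, hC, ?_⟩
    rintro _ ⟨_, ⟨n, rfl⟩, rfl⟩
    rw [hP, Measure.smul_apply, smul_eq_mul]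
    calc _ ≤ (ENNReal.ofReal T)⁻¹ * (ENNReal.ofReal T * ε) := by
          gcongr; exact hCμ _ (hyoung n) (hbound n)
      _ = ε := by rw [← mul_assoc, ENNReal.inv_mul_cancel hT0 hTt, one_mul]
  obtain ⟨Q, -, φ, hφ, hlim⟩ := hcl.isSeqCompact (fun n => subset_closure (mem_range_self n))
  refine ⟨φ, hφ, ENNReal.ofReal T • (Q : Measure (U × ℝ)), ?_⟩
  have hμP : ∀ n, μs n = ENNReal.ofReal T • (P n : Measure (U × ℝ)) := by
    intro n
    rw [hP, smul_smul, ENNReal.mul_inv_cancel hT0 hTt, one_smul]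
  haveI : IsFiniteMeasure (ENNReal.ofReal T • (Q : Measure (U × ℝ))) :=
    Measure.smul_finite _ hTt
  have hQ : IsYoungMeasure T (ENNReal.ofReal T • (Q : Measure (U × ℝ))) := by
    have hm := (ProbabilityMeasure.continuous_map (continuous_snd (X := U) (Y := ℝ))).tendsto Q
    have hm2 := hm.comp hlim
    have hconst : ∀ n, (P n).map (continuous_snd (X := U) (Y := ℝ)).measurable.aemeasurable
        = (P 0).map (continuous_snd (X := U) (Y := ℝ)).measurable.aemeasurable := by
      intro n
      apply Subtype.ext
      change Measure.map Prod.snd ((ENNReal.ofReal T)⁻¹ • μs n)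
        = Measure.map Prod.snd ((ENNReal.ofReal T)⁻¹ • μs 0)
      rw [Measure.map_smul, Measure.map_smul, ym_map_snd.1 (hyoung n), ym_map_snd.1 (hyoung 0)]
    have heq : Q.map (continuous_snd (X := U) (Y := ℝ)).measurable.aemeasurable
        = (P 0).map (continuous_snd (X := U) (Y := ℝ)).measurable.aemeasurable := by
      refine tendsto_nhds_unique hm2 ?_
      refine tendsto_const_nhds.congr fun n => ?_
      exact (hconst (φ n)).symm
    have heq' : Measure.map Prod.snd (Q : Measure (U × ℝ))
        = Measure.map Prod.snd (P 0 : Measure (U × ℝ)) := congrArg Subtype.val heq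
    rw [ym_map_snd, Measure.map_smul, heq', ← Measure.map_smul, ← hμP, ym_map_snd.1 (hyoung 0)]
  refine ⟨hQ, ym_stable (fun n => hyoung (φ n)) hQ fun F => ?_⟩
  have := (ProbabilityMeasure.tendsto_iff_forall_integral_tendsto.1 hlim F).const_mul T
  have hI : ∀ ν : Measure (U × ℝ), ∫ p, F p ∂(ENNReal.ofReal T • ν) = T * ∫ p, F p ∂ν := by
    intro ν
    rw [integral_smul_measure, ENNReal.toReal_ofReal hT.le, smul_eq_mul]
  rw [hI]
  refine this.congr fun n => ?_
  rw [hμP (φ n), hI]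
  rfl
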